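/- arXiv:2206.00163 — 2 statements merged into one kernel-verified Lean document; each statement's English description precedes it below -/
import Mathlib

section
/- The Borwein cubic theta functions satisfy a(q)³ = b(q)³ + c(q)³, where a(q)=∑_{m,n∈ℤ} q^{n²+nm+m²}, b(q)=∑_{m,n∈ℤ} ω^{n−m} q^{n²+nm+m²} with ω=e^{2πi/3}, and c(q)=∑_{m,n∈ℤ} q^{(n+1/3)²+(n+1/3)(m+1/3)+(m+1/3)²}. -/
/-- The Borwein cubic theta function `a(q) = ∑_{m,n ∈ ℤ} q^(m²+mn+n²)`. -/
noncomputable def borweinA (q : ℂ) : ℂ :=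
  ∑' p : ℤ × ℤ, q ^ (p.1 ^ 2 + p.1 * p.2 + p.2 ^ 2)

/-- The Borwein cubic theta function
`b(q) = ∑_{m,n ∈ ℤ} ω^(n−m) q^(m²+mn+n²)`, `ω = e^{2πi/3}`. -/
noncomputable def borweinB (q : ℂ) : ℂ :=
  ∑' p : ℤ × ℤ, Complex.exp (2 * Real.pi * Complex.I / 3) ^ (p.2 - p.1) *
    q ^ (p.1 ^ 2 + p.1 * p.2 + p.2 ^ 2)

/-- The Borwein cubic theta function
`c(q) = ∑_{m,n ∈ ℤ} q^((m+1/3)²+(m+1/3)(n+1/3)+(n+1/3)²)` (complex powers). -/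
noncomputable def borweinC (q : ℂ) : ℂ :=
  ∑' p : ℤ × ℤ, q ^ ((((p.1 : ℂ) + 1/3) ^ 2 + ((p.1 : ℂ) + 1/3) * ((p.2 : ℂ) + 1/3) +
    ((p.2 : ℂ) + 1/3) ^ 2))

/-- Index set for cubes of double sums. -/
abbrev BX : Type := (ℤ × ℤ) × (ℤ × ℤ) × (ℤ × ℤ)

lemma bc_cube (f : ℤ × ℤ → ℂ) (hf : Summable fun p => ‖f p‖) :
    (Summable fun x : BX => f x.1 * (f x.2.1 * f x.2.2)) ∧
    (∑' p, f p) ^ 3 = ∑' x : BX, f x.1 * (f x.2.1 * f x.2.2) := by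
  have h2 : Summable fun z : (ℤ × ℤ) × (ℤ × ℤ) => ‖f z.1 * f z.2‖ := hf.mul_norm hf
  have h3 : Summable fun x : BX => ‖f x.1 * (f x.2.1 * f x.2.2)‖ :=
    Summable.mul_norm (f := f) (g := fun z : (ℤ × ℤ) × (ℤ × ℤ) => f z.1 * f z.2) hf h2
  refine ⟨h3.of_norm, ?_⟩
  rw [← tsum_mul_tsum_of_summable_norm (f := f)
    (g := fun z : (ℤ × ℤ) × (ℤ × ℤ) => f z.1 * f z.2) hf h2,
    ← tsum_mul_tsum_of_summable_norm hf hf]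
  ring

lemma bc_summable (q : ℂ) (h0 : q ≠ 0) (hq : ‖q‖ < 1) (G : ℤ × ℤ → ℤ)
    (hG : ∀ p, |p.1| + |p.2| - 1 ≤ 2 * G p) : Summable fun p => ‖q ^ G p‖ := by
  obtain ⟨s, hs⟩ : ∃ s : ℝ, s = Real.sqrt ‖q‖ := ⟨_, rfl⟩
  have hr : 0 < ‖q‖ := norm_pos_iff.mpr h0
  have s0 : 0 < s := hs ▸ Real.sqrt_pos.mpr hr
  have s1 : s < 1 := by
    rw [hs, Real.sqrt_lt' one_pos]; simpa using hq
  have h1 : Summable fun m : ℤ => s ^ |m| := by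
    have hg : Summable fun n : ℕ => s ^ n := summable_geometric_of_lt_one s0.le s1
    apply Summable.of_nat_of_neg
    · simpa using hg
    · simpa using hg
  have h2 : Summable fun p : ℤ × ℤ => s ^ |p.1| * s ^ |p.2| :=
    Summable.mul_of_nonneg (f := fun m : ℤ => s ^ |m|) (g := fun m : ℤ => s ^ |m|) h1 h1
      (fun m => zpow_nonneg s0.le _) (fun m => zpow_nonneg s0.le _)
  have h3 : Summable fun p : ℤ × ℤ => s ^ |p.1| * s ^ |p.2| * s⁻¹ := h2.mul_right s⁻¹
  have hle : ∀ p : ℤ × ℤ, ‖q ^ G p‖ ≤ s ^ |p.1| * s ^ |p.2| * s⁻¹ := by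
   intro p
   have e : ‖q ^ G p‖ = s ^ (2 * G p) := by
     have hsq : s ^ (2 : ℤ) = ‖q‖ := by
       rw [zpow_ofNat, hs]
       exact Real.sq_sqrt hr.le
     rw [norm_zpow, zpow_mul, hsq]
   rw [e, ← zpow_add₀ s0.ne', ← zpow_sub_one₀ s0.ne']
   exact zpow_le_zpow_right_of_le_one₀ s0 s1.le (hG p)
  exact Summable.of_nonneg_of_le (fun p => norm_nonneg _) hle h3

lemma bc_abs_le_sq (m : ℤ) : |m| ≤ m ^ 2 := by
  rw [← sq_abs]
  rcases eq_or_lt_of_le (abs_nonneg m) with h | h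
  · rw [← h]; norm_num
  · nlinarith

def bQ (p : ℤ × ℤ) : ℤ := p.1 ^ 2 + p.1 * p.2 + p.2 ^ 2
def bR (p : ℤ × ℤ) : ℤ := p.1 ^ 2 + p.1 * p.2 + p.2 ^ 2 + p.1 + p.2

lemma bQ_bound (p : ℤ × ℤ) : |p.1| + |p.2| - 1 ≤ 2 * bQ p := by
  have := bc_abs_le_sq p.1
  have := bc_abs_le_sq p.2
  unfold bQ
  nlinarith [sq_nonneg (p.1 + p.2)]

lemma bR_bound (p : ℤ × ℤ) : |p.1| + |p.2| - 1 ≤ 2 * bR p := by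
  have := bc_abs_le_sq p.1
  have := bc_abs_le_sq p.2
  unfold bR
  nlinarith [sq_nonneg (p.1 + p.2 + 1)]

/-- character exponent on the `a`,`b` side -/
def bS (x : BX) : ℤ := (x.1.2 - x.1.1) + ((x.2.1.2 - x.2.1.1) + (x.2.2.2 - x.2.2.1))
/-- total exponents -/
def bQQ (x : BX) : ℤ := bQ x.1 + (bQ x.2.1 + bQ x.2.2)
def bRR (x : BX) : ℤ := bR x.1 + (bR x.2.1 + bR x.2.2)

def bSwap : BX ≃ BX where
  toFun x := ((x.1.2, x.1.1), (x.2.1.2, x.2.1.1), (x.2.2.2, x.2.2.1))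
  invFun x := ((x.1.2, x.1.1), (x.2.1.2, x.2.1.1), (x.2.2.2, x.2.2.1))
  left_inv _ := rfl
  right_inv _ := rfl

def bRot : BX ≃ BX where
  toFun x := ((x.1.2, -x.1.1 - x.1.2 - 1), x.2)
  invFun x := ((-x.1.1 - x.1.2 - 1, x.1.1), x.2)
  left_inv x := by
    obtain ⟨⟨a, b⟩, y⟩ := x
    simp only [Prod.mk.injEq, and_true]
    omega
  right_inv x := by
    obtain ⟨⟨a, b⟩, y⟩ := x
    simp only [Prod.mk.injEq, and_true, true_and]
    omega

def bThird (a b c d e f : ℤ) : BX := ((a / 3, b / 3), (c / 3, d / 3), (e / 3, f / 3))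

def bFwd (x : BX) : BX :=
  let m1 := x.1.1; let n1 := x.1.2
  let m2 := x.2.1.1; let n2 := x.2.1.2
  let m3 := x.2.2.1; let n3 := x.2.2.2
  let P1 := m1 + m2 + m3
  let R1 := n1 + n2 + n3
  let P2 := m1 + n2 - (m3 + n3)
  let R2 := n1 - (m2 + n2) + m3
  let P3 := m1 - (m2 + n2) + n3
  let R3 := n1 + m2 - (m3 + n3)
  bThird (-P1 - 2 * R1 - 1) (2 * P1 + R1 - 1) (-P2 - 2 * R2 - 1) (2 * P2 + R2 - 1)
    (-P3 - 2 * R3 - 1) (2 * P3 + R3 - 1)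

def bBwd (x : BX) : BX :=
  let m1 := x.1.1; let n1 := x.1.2
  let m2 := x.2.1.1; let n2 := x.2.1.2
  let m3 := x.2.2.1; let n3 := x.2.2.2
  let P1 := m1 + m2 + m3 + 1
  let R1 := n1 + n2 + n3 + 1
  let P2 := m1 - (m2 + n2) + n3
  let R2 := n1 + m2 - (m3 + n3)
  let P3 := m1 + n2 - (m3 + n3)
  let R3 := n1 - (m2 + n2) + m3
  bThird (P1 + 2 * R1) (-2 * P1 - R1) (P2 + 2 * R2) (-2 * P2 - R2)
    (P3 + 2 * R3) (-2 * P3 - R3)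

lemma bFwd_eq (a b c d e f k : ℤ) (hk : b = 3 * k + 1 + a - (d - c + (f - e))) :
    bFwd ((a, b), (c, d), (e, f)) =
      ((-a - c - e - 2 * k - 1 , a + c + e + k),
       (-a - 2 * k - 1 + d - e + f, a + k - f),
       (-a - 2 * k - 1 - c + d + f, a + k - d)) := by
    simp only [bFwd, bThird, Prod.mk.injEq]
    refine ⟨⟨?_, ?_⟩, ⟨?_, ?_⟩, ⟨?_, ?_⟩⟩ <;> omega

lemma bBwd_eq (a b c d e f k : ℤ) (hk : b = 3 * k + a - (d - c + (f - e))) :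
    bBwd ((a, b), (c, d), (e, f)) =
      ((a + c + e + 1 + 2 * k, -(a + c + e + 1) - k),
       (a + 2 * k + c - d - f, -a + d - k), (a - d + e - f + 2 * k, -a + f - k)) := by
  simp only [bBwd, bThird, Prod.mk.injEq]
  refine ⟨⟨?_, ?_⟩, ⟨?_, ?_⟩, ⟨?_, ?_⟩⟩ <;> omega

def bEquiv : {x : BX // bS x % 3 = 1} ≃ {y : BX // bS y % 3 = 0} where
  toFun x := ⟨bFwd x.1, by
    obtain ⟨⟨⟨a, b⟩, ⟨c, d⟩, ⟨e, f⟩⟩, h⟩ := x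
    simp only [bS, bFwd, bThird] at h ⊢
    omega⟩
  invFun x := ⟨bBwd x.1, by
    obtain ⟨⟨⟨a, b⟩, ⟨c, d⟩, ⟨e, f⟩⟩, h⟩ := x
    simp only [bS, bBwd, bThird] at h ⊢
    omega⟩
  left_inv x := by
    obtain ⟨⟨⟨a, b⟩, ⟨c, d⟩, ⟨e, f⟩⟩, h⟩ := x
    simp only [bS] at h
    obtain ⟨k, hk⟩ : ∃ k, b = 3 * k + 1 + a - (d - c + (f - e)) :=
      ⟨((b - a) + ((d - c) + (f - e))) / 3, by omega⟩
    apply Subtype.ext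
    simp only [bFwd_eq a b c d e f k hk]
    simp only [bBwd, bThird, Prod.mk.injEq]
    refine ⟨⟨?_, ?_⟩, ⟨?_, ?_⟩, ⟨?_, ?_⟩⟩ <;> omega
  right_inv x := by
    obtain ⟨⟨⟨a, b⟩, ⟨c, d⟩, ⟨e, f⟩⟩, h⟩ := x
    simp only [bS] at h
    obtain ⟨k, hk⟩ : ∃ k, b = 3 * k + a - (d - c + (f - e)) :=
      ⟨((b - a) + ((d - c) + (f - e))) / 3, by omega⟩
    apply Subtype.ext
    simp only [bBwd_eq a b c d e f k hk]
    simp only [bFwd, bThird, Prod.mk.injEq]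
    refine ⟨⟨?_, ?_⟩, ⟨?_, ?_⟩, ⟨?_, ?_⟩⟩ <;> omega

lemma bEquiv_exp (x : BX) (h : bS x % 3 = 1) : bQQ x = 1 + bRR (bFwd x) := by
  obtain ⟨⟨a, b⟩, ⟨c, d⟩, ⟨e, f⟩⟩ := x
  simp only [bS] at h
  obtain ⟨k, hk⟩ : ∃ k, b = 3 * k + 1 + a - (d - c + (f - e)) :=
    ⟨((b - a) + ((d - c) + (f - e))) / 3, by omega⟩
  rw [bFwd_eq a b c d e f k hk]
  simp only [bQQ, bRR, bQ, bR]
  subst hk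
  ring

/-- Split a sum according to the residue of `bS`. -/
lemma bc_split (h : BX → ℂ) (hh : Summable h) :
    (∀ j : ℤ, Summable fun x => if bS x % 3 = j then h x else 0) ∧
    ∑' x, h x = (∑' x, if bS x % 3 = 0 then h x else 0) +
      (∑' x, if bS x % 3 = 1 then h x else 0) + ∑' x, if bS x % 3 = 2 then h x else 0 := by
  have hj : ∀ j : ℤ, Summable fun x => if bS x % 3 = j then h x else 0 := by
    intro j
    exact (hh.indicator {x | bS x % 3 = j}).congr fun x => by simp [Set.indicator]
  refine ⟨hj, ?_⟩
  rw [← (hj 0).tsum_add (hj 1), ← ((hj 0).add (hj 1)).tsum_add (hj 2)]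
  refine tsum_congr fun x => ?_
  have : bS x % 3 = 0 ∨ bS x % 3 = 1 ∨ bS x % 3 = 2 := by omega
  rcases this with h | h | h <;> simp [h]

lemma bc_main (q : ℂ) (h0 : q ≠ 0) (hq : ‖q‖ < 1) (w : ℂ) (hw : ‖w‖ = 1) (hw1 : 1 + w + w ^ 2 = 0) :
    (∑' p, q ^ bQ p) ^ 3 = (∑' p : ℤ × ℤ, w ^ (p.2 - p.1) * q ^ bQ p) ^ 3
      + q * (∑' p, q ^ bR p) ^ 3 := by
  have w0 : w ≠ 0 := by rintro rfl; simp at hw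
  have w3 : w ^ (3 : ℤ) = 1 := by
    have : w ^ 3 = 1 := by linear_combination (w - 1) * hw1
    exact_mod_cast this
  have wmod : ∀ k : ℤ, w ^ k = w ^ (k % 3) := fun k => by
    conv_lhs => rw [← Int.mul_ediv_add_emod k 3, zpow_add₀ w0, zpow_mul, w3, one_zpow, one_mul]
  have sA := bc_summable q h0 hq bQ bQ_bound
  have sC := bc_summable q h0 hq bR bR_bound
  have sB : Summable fun p : ℤ × ℤ => ‖w ^ (p.2 - p.1) * q ^ bQ p‖ := by
    simpa [norm_mul, norm_zpow, hw] using sA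
  obtain ⟨uA, cA⟩ := bc_cube _ sA
  obtain ⟨uB, cB⟩ := bc_cube _ sB
  obtain ⟨uC, cC⟩ := bc_cube _ sC
  have eA : ∀ x : BX, q ^ bQ x.1 * (q ^ bQ x.2.1 * q ^ bQ x.2.2) = q ^ bQQ x := fun x => by
    rw [bQQ, zpow_add₀ h0, zpow_add₀ h0]
  have eC : ∀ x : BX, q ^ bR x.1 * (q ^ bR x.2.1 * q ^ bR x.2.2) = q ^ bRR x := fun x => by
    rw [bRR, zpow_add₀ h0, zpow_add₀ h0]
  have eB : ∀ x : BX, w ^ (x.1.2 - x.1.1) * q ^ bQ x.1 * (w ^ (x.2.1.2 - x.2.1.1) * q ^ bQ x.2.1 *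
      (w ^ (x.2.2.2 - x.2.2.1) * q ^ bQ x.2.2)) = w ^ bS x * q ^ bQQ x := fun x => by
    rw [← eA, bS, zpow_add₀ w0, zpow_add₀ w0]; ring
  simp only [eA] at uA cA
  simp only [eB] at uB cB
  simp only [eC] at uC cC
  obtain ⟨-, dA⟩ := bc_split _ uA
  obtain ⟨-, dB⟩ := bc_split _ uB
  obtain ⟨-, dC⟩ := bc_split _ uC
  have b0 : (∑' x : BX, if bS x % 3 = 0 then w ^ bS x * q ^ bQQ x else 0) =
      ∑' x : BX, if bS x % 3 = 0 then q ^ bQQ x else 0 := by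
    refine tsum_congr fun x => ?_
    split_ifs with h
    · rw [wmod, h]; simp
    · rfl
  have b1 : (∑' x : BX, if bS x % 3 = 1 then w ^ bS x * q ^ bQQ x else 0) =
      w * ∑' x : BX, if bS x % 3 = 1 then q ^ bQQ x else 0 := by
    rw [← tsum_mul_left]
    refine tsum_congr fun x => ?_
    split_ifs with h
    · rw [wmod, h]; simp
    · simp
  have b2 : (∑' x : BX, if bS x % 3 = 2 then w ^ bS x * q ^ bQQ x else 0) =
      w ^ 2 * ∑' x : BX, if bS x % 3 = 2 then q ^ bQQ x else 0 := by
    rw [← tsum_mul_left]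
    refine tsum_congr fun x => ?_
    split_ifs with h
    · rw [wmod, h]; norm_cast
    · simp
  have a2 : (∑' x : BX, if bS x % 3 = 2 then q ^ bQQ x else 0) =
      ∑' x : BX, if bS x % 3 = 1 then q ^ bQQ x else 0 := by
    rw [← bSwap.tsum_eq]
    refine tsum_congr fun x => ?_
    have e1 : bS (bSwap x) = - bS x := by simp only [bS, bSwap, Equiv.coe_fn_mk]; ring
    have e2 : bQQ (bSwap x) = bQQ x := by simp only [bQQ, bQ, bSwap, Equiv.coe_fn_mk]; ring
    rw [e1, e2]
    exact if_congr (by omega) rfl rfl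
  have rot : ∀ i j : ℤ, (∀ k : ℤ, (k - 1) % 3 = i ↔ k % 3 = j) →
      (∑' x : BX, if bS x % 3 = i then q ^ bRR x else 0) =
      ∑' x : BX, if bS x % 3 = j then q ^ bRR x else 0 := by
    intro i j hij
    rw [← bRot.tsum_eq]
    refine tsum_congr fun x => ?_
    have e1 : bS (bRot x) = (bS x - 1) + 3 * (-x.1.2) := by
      simp only [bS, bRot, Equiv.coe_fn_mk]; ring
    have e2 : bRR (bRot x) = bRR x := by simp only [bRR, bR, bRot, Equiv.coe_fn_mk]; ring
    rw [e1, e2, Int.add_mul_emod_self_left]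
    exact if_congr (hij _) rfl rfl
  have r1 := rot 0 1 (fun k => by omega)
  have r2 := rot 1 2 (fun k => by omega)
  have key : (∑' x : BX, if bS x % 3 = 1 then q ^ bQQ x else 0) =
      q * ∑' x : BX, if bS x % 3 = 0 then q ^ bRR x else 0 := by
    have l : (∑' x : BX, if bS x % 3 = 1 then q ^ bQQ x else 0) =
        ∑' x : {x : BX // bS x % 3 = 1}, q ^ bQQ x.1 := by
      rw [show (∑' x : {x : BX // bS x % 3 = 1}, q ^ bQQ x.1) = _ from
        tsum_subtype {x : BX | bS x % 3 = 1} (fun x => q ^ bQQ x)]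
      refine tsum_congr fun x => ?_
      simp [Set.indicator]
    have r : (∑' x : BX, if bS x % 3 = 0 then q ^ bRR x else 0) =
        ∑' x : {x : BX // bS x % 3 = 0}, q ^ bRR x.1 := by
      rw [show (∑' x : {x : BX // bS x % 3 = 0}, q ^ bRR x.1) = _ from
        tsum_subtype {x : BX | bS x % 3 = 0} (fun x => q ^ bRR x)]
      refine tsum_congr fun x => ?_
      simp [Set.indicator]
    rw [l, r, ← bEquiv.tsum_eq, ← tsum_mul_left]
    refine tsum_congr fun x => ?_
    rw [bEquiv_exp x.1 x.2, zpow_add₀ h0, zpow_one]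
    rfl
  rw [cA, cB, cC, dA, dB, dC, b0, b1, b2, a2, ← r2, ← r1, key]
  set T := ∑' x : BX, if bS x % 3 = 0 then q ^ bRR x else 0
  linear_combination (- q * T) * hw1

lemma bQ_zero {p : ℤ × ℤ} (h : bQ p = 0) : p = 0 := by
  unfold bQ at h
  have h1 : p.1 = 0 := by
    have : p.1 ^ 2 = 0 := by nlinarith [sq_nonneg p.1, sq_nonneg p.2, sq_nonneg (p.1 + p.2)]
    simpa using this
  have h2 : p.2 = 0 := by
    have : p.2 ^ 2 = 0 := by nlinarith [sq_nonneg p.1, sq_nonneg p.2, sq_nonneg (p.1 + p.2)]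
    simpa using this
  exact Prod.ext h1 h2

lemma bC_ne (p : ℤ × ℤ) : ((bR p : ℤ) : ℂ) + 1 / 3 ≠ 0 := by
  intro h
  have : ((3 * bR p + 1 : ℤ) : ℂ) = 0 := by push_cast; linear_combination 3 * h
  have : 3 * bR p + 1 = 0 := by exact_mod_cast this
  omega

/-- `a(q)³ = b(q)³ + c(q)³`. -/
theorem borwein_cubic (q : ℂ) (hq : ‖q‖ < 1) :
    borweinA q ^ 3 = borweinB q ^ 3 + borweinC q ^ 3 := by
  have hC : ∀ p : ℤ × ℤ, (((p.1 : ℂ) + 1/3) ^ 2 + ((p.1 : ℂ) + 1/3) * ((p.2 : ℂ) + 1/3) +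
    ((p.2 : ℂ) + 1/3) ^ 2) = (bR p : ℂ) + 1 / 3 := fun p => by
    simp only [bR]; push_cast; ring
  by_cases h0 : q = 0
  · subst h0
    have hA : borweinA 0 = 1 := by
      unfold borweinA
      rw [tsum_eq_single (0 : ℤ × ℤ)]
      · simp
      · intro p hp
        exact zero_zpow _ fun h => hp (bQ_zero h)
    have hB : borweinB 0 = 1 := by
      unfold borweinB
      rw [tsum_eq_single (0 : ℤ × ℤ)]
      · simp
      · intro p hp
        have : (0 : ℂ) ^ (p.1 ^ 2 + p.1 * p.2 + p.2 ^ 2) = 0 :=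
          zero_zpow _ fun h => hp (bQ_zero h)
        rw [this, mul_zero]
    have hC0 : borweinC 0 = 0 := by
      unfold borweinC
      simp only [hC, Complex.zero_cpow (bC_ne _), tsum_zero]
    rw [hA, hB, hC0]; norm_num
  · have hcc : borweinC q = q ^ (1 / 3 : ℂ) * ∑' p, q ^ bR p := by
      unfold borweinC
      rw [← tsum_mul_left]
      refine tsum_congr fun p => ?_
      rw [hC, Complex.cpow_add _ _ h0, Complex.cpow_intCast, mul_comm]
    have hthird : (q ^ (1 / 3 : ℂ)) ^ 3 = q := by
      have := Complex.cpow_nat_inv_pow q (n := 3) (by norm_num)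
      simpa using this
    have hprim := Complex.isPrimitiveRoot_exp 3 (by norm_num)
    push_cast at hprim
    have hw := hprim.norm'_eq_one (by norm_num)
    have hw1 := hprim.geom_sum_eq_zero (by norm_num)
    have := bc_main q h0 hq _ hw (by simpa [Finset.sum_range_succ] using hw1)
    rw [hcc, mul_pow, hthird]
    exact this
end

section
/- ψ(q²)φ(q⁵) − qψ(q^{10})φ(q) = (q;q)_∞ (q⁵;q⁵)_∞, where φ(q)=∑_{n∈ℤ} q^{n²} and ψ(q)=∑_{n≥0} q^{n(n+1)/2}. -/
/-- Ramanujan's theta function `φ(q) = ∑_{n ∈ ℤ} q^(n²)`. -/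
noncomputable def rphi (q : ℂ) : ℂ := ∑' n : ℤ, q ^ (n ^ 2)

/-- Ramanujan's theta function `ψ(q) = ∑_{n≥0} q^(n(n+1)/2)`. -/
noncomputable def rpsi (q : ℂ) : ℂ := ∑' n : ℕ, q ^ (n * (n + 1) / 2)

open Filter Topology

theorem aux_prod_bound (x : ℂ) (hx : ‖x‖ < 1) (k n : ℕ) :
    ‖∏ i ∈ Finset.range n, (1 - x ^ (k + i + 1))‖ ≤ Real.exp (1 - ‖x‖)⁻¹ := by
  rw [norm_prod]
  calc ∏ i ∈ Finset.range n, ‖1 - x ^ (k + i + 1)‖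
      ≤ ∏ i ∈ Finset.range n, Real.exp (‖x‖ ^ i) := by
        refine Finset.prod_le_prod (fun _ _ => norm_nonneg _) (fun i _ => ?_)
        have h1 : ‖1 - x ^ (k + i + 1)‖ ≤ 1 + ‖x‖ ^ (k + i + 1) := by
          refine (norm_sub_le _ _).trans ?_
          simp
        have h2 : ‖x‖ ^ (k + i + 1) ≤ ‖x‖ ^ i :=
          pow_le_pow_of_le_one (norm_nonneg _) hx.le (by omega)
        have h3 := Real.add_one_le_exp (‖x‖ ^ i)
        linarith
    _ = Real.exp (∑ i ∈ Finset.range n, ‖x‖ ^ i) := (Real.exp_sum _ _).symm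
    _ ≤ Real.exp (1 - ‖x‖)⁻¹ := by
        apply Real.exp_le_exp.mpr
        rw [← tsum_geometric_of_lt_one (norm_nonneg _) hx]
        exact (summable_geometric_of_lt_one (norm_nonneg _) hx).sum_le_tsum _
          (fun i _ => by positivity)

theorem aux_term_bound (x : ℂ) (hx : ‖x‖ < 1) (k n : ℕ) :
    ‖x ^ ((k + 1) * n) * ∏ i ∈ Finset.range (n + 1), (1 - x ^ (k + i + 1))‖ ≤
      ‖x‖ ^ n * Real.exp (1 - ‖x‖)⁻¹ := by
  rw [norm_mul, norm_pow]
  refine mul_le_mul ?_ (aux_prod_bound x hx k _) (norm_nonneg _) (by positivity)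
  exact pow_le_pow_of_le_one (norm_nonneg _) hx.le (by nlinarith)

theorem aux_summable_int (x : ℂ) (hx : ‖x‖ < 1) (e : ℤ → ℕ) (he : ∀ n, n.natAbs ≤ e n) :
    Summable fun n => ‖x ^ e n‖ := by
  have h : Summable fun n : ℤ => ‖x‖ ^ n.natAbs := by
    apply Summable.of_nat_of_neg <;>
      simpa using summable_geometric_of_lt_one (norm_nonneg _) hx
  refine h.of_nonneg_of_le (fun _ => norm_nonneg _) (fun n => ?_)
  rw [norm_pow]
  exact pow_le_pow_of_le_one (norm_nonneg _) hx.le (he n)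

theorem aux_pent (n : ℤ) : n.natAbs ≤ pentagonal n := by
  have h := two_mul_natCast_pentagonal n
  zify
  rcases le_total 0 n with h0 | h0
  · rw [abs_of_nonneg h0]
    rcases h0.eq_or_lt with h1 | h1
    · subst h1; simp
    · nlinarith
  · rw [abs_of_nonpos h0]; nlinarith

theorem aux_sum_pent (x : ℂ) (hx : ‖x‖ < 1) :
    Summable fun n : ℤ => ‖(-1 : ℂ) ^ n * x ^ pentagonal n‖ := by
  simpa using aux_summable_int x hx _ aux_pent

theorem aux_congr {β : Type} {f g : β → ℂ} {a : ℂ} (hf : HasSum f a) (h : ∀ k, g k = f k) :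
    HasSum g a := by
  rw [funext h]; exact hf

theorem aux_euler (x : ℂ) (hx : ‖x‖ < 1) :
    ∏' n : ℕ, (1 - x ^ (n + 1)) = ∑' n : ℤ, (-1 : ℂ) ^ n * x ^ pentagonal n := by
  have hs := ((aux_sum_pent x hx).of_norm).hasSum
  have hs2 : HasSum (fun k : ℕ ↦ (-1 : ℂ) ^ k * (x ^ pentagonal (-k) - x ^ pentagonal (k + 1)))
      (∑' n : ℤ, (-1 : ℂ) ^ n * x ^ pentagonal n) := by
    rw [← neg_injective.hasSum_iff (fun x hx ↦ by absurd hx; use -x; simp)] at hs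
    refine aux_congr hs.nat_add_neg_add_one fun k => ?_
    simp only [Function.comp_apply, neg_neg, zpow_neg, zpow_natCast, ← inv_pow, inv_neg_one]
    rw [zpow_add₀ (by norm_num)]
    simp
    ring
  have hg := (summable_geometric_of_lt_one (norm_nonneg _) hx).mul_right (Real.exp (1 - ‖x‖)⁻¹)
  rw [← hs2.tsum_eq]
  refine Pentagonal.tprod_one_sub_pow ?_ ?_ ?_ hs2.summable ?_
  · exact tendsto_pow_atTop_nhds_zero_of_norm_lt_one hx
  · intro k
    exact hg.of_norm_bounded (fun n => aux_term_bound x hx k n)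
  · intro k
    have : Summable fun n : ℕ => ‖-x ^ (n + k + 1)‖ := by
      simp only [norm_neg, norm_pow]
      refine (summable_geometric_of_lt_one (norm_nonneg _) hx).of_nonneg_of_le
        (fun _ => by positivity) (fun n => ?_)
      exact pow_le_pow_of_le_one (norm_nonneg _) hx.le (by omega)
    simpa [sub_eq_add_neg] using multipliable_one_add_of_summable this
  · have h0 : Tendsto (fun k : ℕ => ‖x‖ ^ k * ∑' n : ℕ, ‖x‖ ^ n * Real.exp (1 - ‖x‖)⁻¹)
        atTop (𝓝 0) := by
      simpa using (tendsto_pow_atTop_nhds_zero_of_lt_one (norm_nonneg _) hx).mul_const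
        (∑' n : ℕ, ‖x‖ ^ n * Real.exp (1 - ‖x‖)⁻¹)
    refine squeeze_zero_norm (fun k => ?_) h0
    rw [norm_mul]
    refine mul_le_mul ?_ ?_ (norm_nonneg _) (by positivity)
    · simp only [norm_mul, norm_pow, norm_neg, norm_one, one_pow, one_mul]
      refine pow_le_pow_of_le_one (norm_nonneg _) hx.le ?_
      rw [Nat.le_div_iff_mul_le (by norm_num)]
      nlinarith
    · exact tsum_of_norm_bounded hg.hasSum (fun n => aux_term_bound x hx k n)

theorem aux_psi (x : ℂ) (hx : ‖x‖ < 1) :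
    (Summable fun n : ℤ => ‖x ^ (n ^ 2 + n)‖) ∧
    HasSum (fun n : ℤ => x ^ (n ^ 2 + n)) (2 * rpsi (x ^ 2)) := by
  have hsn : Summable fun n : ℕ => ‖x ^ (n * (n + 1))‖ := by
    refine (summable_geometric_of_lt_one (norm_nonneg _) hx).of_nonneg_of_le
      (fun _ => by positivity) (fun n => ?_)
    rw [norm_pow]
    exact pow_le_pow_of_le_one (norm_nonneg _) hx.le (by nlinarith)
  have e1 : ∀ n : ℕ, x ^ ((n : ℤ) ^ 2 + n) = x ^ (n * (n + 1)) := fun n => by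
    rw [← zpow_natCast]; congr 1; push_cast; ring
  have e2 : ∀ n : ℕ, x ^ ((-((n : ℤ) + 1)) ^ 2 + -((n : ℤ) + 1)) = x ^ (n * (n + 1)) := fun n => by
    rw [← zpow_natCast]; congr 1; push_cast; ring
  have hr : rpsi (x ^ 2) = ∑' n : ℕ, x ^ (n * (n + 1)) := by
    unfold rpsi
    refine tsum_congr fun n => ?_
    rw [← pow_mul, Nat.mul_div_cancel' (Nat.even_mul_succ_self n).two_dvd]
  constructor
  · refine (HasSum.of_nat_of_neg_add_one (f := fun n : ℤ => ‖x ^ (n ^ 2 + n)‖)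
      (m := ∑' n : ℕ, ‖x ^ (n * (n + 1))‖) (m' := ∑' n : ℕ, ‖x ^ (n * (n + 1))‖) ?_ ?_).summable
    · simpa only [e1] using hsn.hasSum
    · simpa only [e2] using hsn.hasSum
  · rw [two_mul, hr]
    refine HasSum.of_nat_of_neg_add_one (f := fun n : ℤ => x ^ (n ^ 2 + n)) ?_ ?_
    · simpa only [e1] using hsn.of_norm.hasSum
    · simpa only [e2] using hsn.of_norm.hasSum

theorem aux_phi (x : ℂ) (hx : ‖x‖ < 1) :
    Summable fun n : ℤ => ‖x ^ (n ^ 2)‖ := by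
  have h := aux_summable_int x hx (fun n => n.natAbs ^ 2) (fun n => by nlinarith)
  convert h using 3 with n
  rw [← zpow_natCast]; simp

/-- The two-variable summand. -/
noncomputable def auxF (q : ℂ) (p : ℤ × ℤ) : ℂ :=
  (-1) ^ p.2 * q ^ (p.1 ^ 2 + p.1 - p.1 * p.2 + (pentagonal p.2 : ℤ))

theorem aux_split2 (f : ℤ × ℤ → ℂ) (a b : ℂ)
    (h0 : HasSum (fun p : ℤ × ℤ => f (p.1 + p.2, 2 * p.2)) a)
    (h1 : HasSum (fun p : ℤ × ℤ => f (p.1 + p.2, 2 * p.2 + 1)) b) : HasSum f (a + b) := by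
  have i0 : Function.Injective (fun p : ℤ × ℤ => (p.1 + p.2, 2 * p.2)) := by
    rintro ⟨a, b⟩ ⟨c, d⟩ h; simp only [Prod.mk.injEq] at h ⊢; omega
  have i1 : Function.Injective (fun p : ℤ × ℤ => (p.1 + p.2, 2 * p.2 + 1)) := by
    rintro ⟨a, b⟩ ⟨c, d⟩ h; simp only [Prod.mk.injEq] at h ⊢; omega
  refine (i0.hasSum_range_iff.mpr h0).add_isCompl ?_ (i1.hasSum_range_iff.mpr h1)
  rw [isCompl_iff, Set.disjoint_iff_inter_eq_empty, codisjoint_iff]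
  constructor
  · ext ⟨s, y⟩
    simp only [Set.mem_inter_iff, Set.mem_range, Prod.exists, Prod.mk.injEq, Set.mem_empty_iff_false,
      iff_false]
    rintro ⟨⟨a, b, h1, h2⟩, c, d, h3, h4⟩
    omega
  · change _ ∪ _ = Set.univ
    ext ⟨s, y⟩
    simp only [Set.mem_union, Set.mem_range, Prod.exists, Prod.mk.injEq, Set.mem_univ, iff_true]
    rcases Int.even_or_odd' y with ⟨k, hk | hk⟩
    · exact Or.inl ⟨s - k, k, by omega, by omega⟩
    · exact Or.inr ⟨s - k, k, by omega, by omega⟩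

theorem aux_split3 (f : ℤ × ℤ → ℂ) (a b c : ℂ)
    (h0 : HasSum (fun p : ℤ × ℤ => f (3 * p.1, p.2)) a)
    (h1 : HasSum (fun p : ℤ × ℤ => f (3 * p.1 + 1, p.2)) b)
    (h2 : HasSum (fun p : ℤ × ℤ => f (3 * p.1 - 1, p.2)) c) : HasSum f (a + b + c) := by
  have i0 : Function.Injective (fun p : ℤ × ℤ => (3 * p.1, p.2)) := by
    rintro ⟨a, b⟩ ⟨c, d⟩ h; simp only [Prod.mk.injEq] at h ⊢; omega
  have i1 : Function.Injective (fun p : ℤ × ℤ => (3 * p.1 + 1, p.2)) := by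
    rintro ⟨a, b⟩ ⟨c, d⟩ h; simp only [Prod.mk.injEq] at h ⊢; omega
  have i2 : Function.Injective (fun p : ℤ × ℤ => (3 * p.1 - 1, p.2)) := by
    rintro ⟨a, b⟩ ⟨c, d⟩ h; simp only [Prod.mk.injEq] at h ⊢; omega
  have h01 := (i0.hasSum_range_iff.mpr h0).add_disjoint ?_ (i1.hasSum_range_iff.mpr h1)
  · refine h01.add_isCompl ?_ (i2.hasSum_range_iff.mpr h2)
    rw [isCompl_iff, Set.disjoint_iff_inter_eq_empty, codisjoint_iff]
    constructor
    · ext ⟨s, y⟩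
      simp only [Set.mem_inter_iff, Set.mem_union, Set.mem_range, Prod.exists, Prod.mk.injEq,
        Set.mem_empty_iff_false, iff_false]
      rintro ⟨⟨a, b, h1, h2⟩ | ⟨a, b, h1, h2⟩, c, d, h3, h4⟩ <;> omega
    · change _ ∪ _ = Set.univ
      ext ⟨s, y⟩
      simp only [Set.mem_union, Set.mem_range, Prod.exists, Prod.mk.injEq, Set.mem_univ, iff_true]
      have h : s % 3 = 0 ∨ s % 3 = 1 ∨ s % 3 = 2 := by omega
      rcases h with h | h | h
      · exact Or.inl (Or.inl ⟨s / 3, y, by omega, rfl⟩)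
      · exact Or.inl (Or.inr ⟨s / 3, y, by omega, rfl⟩)
      · exact Or.inr ⟨s / 3 + 1, y, by omega, rfl⟩
  · rw [Set.disjoint_iff_inter_eq_empty]
    ext ⟨s, y⟩
    simp only [Set.mem_inter_iff, Set.mem_range, Prod.exists, Prod.mk.injEq, Set.mem_empty_iff_false,
      iff_false]
    rintro ⟨⟨a, b, h1, h2⟩, c, d, h3, h4⟩
    omega

theorem aux_hasSum_mul (f g : ℤ → ℂ) (hf : Summable fun n => ‖f n‖) (hg : Summable fun n => ‖g n‖) :
    HasSum (fun p : ℤ × ℤ => f p.1 * g p.2) ((∑' n, f n) * ∑' n, g n) := by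
  rw [tsum_mul_tsum_of_summable_norm hf hg]
  exact (summable_mul_of_summable_norm hf hg).hasSum

theorem aux_left (q : ℂ) (hq : ‖q‖ < 1) (h0 : q ≠ 0) :
    HasSum (auxF q) (2 * (rpsi (q ^ 2) * rphi (q ^ 5) - q * rpsi (q ^ 10) * rphi q)) := by
  have hq5 : ‖q ^ 5‖ < 1 := by
    rw [norm_pow]; exact pow_lt_one₀ (norm_nonneg _) hq (by norm_num)
  have hA := aux_hasSum_mul _ _ (aux_psi q hq).1 (aux_phi (q ^ 5) hq5)
  have hB := (aux_hasSum_mul _ _ (aux_phi q hq) (aux_psi (q ^ 5) hq5).1).mul_left (-q)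
  rw [(aux_psi q hq).2.tsum_eq] at hA
  rw [(aux_psi (q ^ 5) hq5).2.tsum_eq] at hB
  have key := aux_split2 (auxF q) (2 * rpsi (q ^ 2) * ∑' n : ℤ, (q ^ 5) ^ n ^ 2)
    (-q * ((∑' n : ℤ, q ^ n ^ 2) * (2 * rpsi ((q ^ 5) ^ 2)))) ?_ ?_
  rotate_left 1
  · convert hA using 2 with p
    obtain ⟨m, n⟩ := p
    have hp := two_mul_natCast_pentagonal (2 * n)
    simp only [auxF]
    rw [Even.neg_one_zpow (even_two_mul n), one_mul, ← zpow_natCast q 5, ← zpow_mul, ← zpow_add₀ h0]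
    congr 1
    push_cast
    linarith
  · refine aux_congr hB fun p => ?_
    obtain ⟨m, n⟩ := p
    have hp := two_mul_natCast_pentagonal (2 * n + 1)
    simp only [auxF]
    rw [Odd.neg_one_zpow (odd_two_mul_add_one n), neg_mul, neg_mul, one_mul, neg_inj,
      ← zpow_natCast q 5, ← zpow_mul, ← zpow_add₀ h0, ← zpow_one_add₀ h0]
    congr 1
    push_cast
    linarith
  · convert key using 1
    rw [← pow_mul]
    simp only [rphi]
    ring

theorem aux_right (q : ℂ) (hq : ‖q‖ < 1) (h0 : q ≠ 0) :
    HasSum (fun p : ℤ × ℤ => auxF q (3 * p.1, p.2))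
      ((∏' n : ℕ, (1 - q ^ (n + 1))) * ∏' n : ℕ, (1 - q ^ (5 * (n + 1)))) := by
  have hq5 : ‖q ^ 5‖ < 1 := by
    rw [norm_pow]; exact pow_lt_one₀ (norm_nonneg _) hq (by norm_num)
  have h := aux_hasSum_mul _ _ (aux_sum_pent q hq) (aux_sum_pent (q ^ 5) hq5)
  rw [← aux_euler q hq, ← aux_euler _ hq5] at h
  simp only [pow_mul]
  let e : ℤ × ℤ ≃ ℤ × ℤ :=
    { toFun := fun p => (p.2 - p.1, -p.1)
      invFun := fun p => (-p.2, p.1 - p.2)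
      left_inv := fun p => by ext <;> simp
      right_inv := fun p => by ext <;> simp }
  rw [← e.hasSum_iff] at h
  convert h using 2 with p
  obtain ⟨k, y⟩ := p
  have h1 := two_mul_natCast_pentagonal y
  have h2 := two_mul_natCast_pentagonal (y - k)
  have h3 := two_mul_natCast_pentagonal (-k)
  simp only [auxF, Function.comp_apply, e, Equiv.coe_fn_mk]
  rw [mul_mul_mul_comm, ← zpow_add₀ (by norm_num : (-1 : ℂ) ≠ 0), ← pow_mul,
    ← zpow_natCast q, ← zpow_natCast q, ← zpow_add₀ h0]
  congr 1
  · have : y = (y - k + -k) + 2 * k := by ring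
    conv_lhs => rw [this, zpow_add₀ (by norm_num : (-1 : ℂ) ≠ 0),
      Even.neg_one_zpow (even_two_mul k), mul_one]
  · congr 1
    push_cast
    linarith

theorem aux_mid (q : ℂ) : ∑' p : ℤ × ℤ, auxF q (3 * p.1 + 1, p.2) = 0 := by
  let e : ℤ × ℤ ≃ ℤ × ℤ :=
    { toFun := fun p => (p.1, 2 * p.1 + 1 - p.2)
      invFun := fun p => (p.1, 2 * p.1 + 1 - p.2)
      left_inv := fun p => by ext <;> simp
      right_inv := fun p => by ext <;> simp }
  have h := e.tsum_eq (fun p : ℤ × ℤ => auxF q (3 * p.1 + 1, p.2))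
  have h2 : ∀ p : ℤ × ℤ, auxF q (3 * (e p).1 + 1, (e p).2) = - auxF q (3 * p.1 + 1, p.2) := by
    rintro ⟨k, y⟩
    have h1 := two_mul_natCast_pentagonal y
    have h2 := two_mul_natCast_pentagonal (2 * k + 1 - y)
    simp only [auxF, e, Equiv.coe_fn_mk]
    rw [← neg_mul]
    congr 1
    · have : 2 * k + 1 - y = y + (2 * (k - y) + 1) := by ring
      rw [this, zpow_add₀ (by norm_num : (-1 : ℂ) ≠ 0),
        Odd.neg_one_zpow (odd_two_mul_add_one _), mul_neg_one]
    · congr 1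
      linarith
  simp only [h2, tsum_neg] at h
  exact self_eq_neg.mp h.symm

theorem aux_neg (q : ℂ) (a : ℂ) (h : HasSum (fun p : ℤ × ℤ => auxF q (3 * p.1, p.2)) a) :
    HasSum (fun p : ℤ × ℤ => auxF q (3 * p.1 - 1, p.2)) a := by
  rw [← (Equiv.neg (ℤ × ℤ)).hasSum_iff] at h
  convert h using 2 with p
  obtain ⟨k, y⟩ := p
  have h1 := two_mul_natCast_pentagonal y
  have h2 := two_mul_natCast_pentagonal (-y)
  simp only [auxF, Function.comp_apply, Equiv.neg_apply, Prod.fst_neg, Prod.snd_neg]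
  congr 1
  · rw [zpow_neg, ← inv_zpow, inv_neg_one]
  · congr 1
    linarith

theorem aux_zero_phi : rphi 0 = 1 := by
  unfold rphi
  rw [tsum_eq_single 0]
  · simp
  · intro n hn
    exact zero_zpow _ (by positivity)

theorem aux_zero_psi : rpsi 0 = 1 := by
  unfold rpsi
  rw [tsum_eq_single 0]
  · simp
  · intro n hn
    have h : 1 ≤ n * (n + 1) / 2 := by
      rw [Nat.le_div_iff_mul_le (by norm_num)]
      have : 1 ≤ n := by omega
      nlinarith
    exact zero_pow (by omega)

/-- `ψ(q²)φ(q⁵) − q ψ(q¹⁰)φ(q) = (q;q)_∞ (q⁵;q⁵)_∞`. -/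
theorem psi_phi_eta (q : ℂ) (hq : ‖q‖ < 1) :
    rpsi (q ^ 2) * rphi (q ^ 5) - q * rpsi (q ^ 10) * rphi q =
      (∏' n : ℕ, (1 - q ^ (n + 1))) * ∏' n : ℕ, (1 - q ^ (5 * (n + 1))) := by
  rcases eq_or_ne q 0 with rfl | h0
  · simp [aux_zero_phi, aux_zero_psi]
  · have hL := aux_left q hq h0
    have hR := aux_right q hq h0
    have i1 : Function.Injective (fun p : ℤ × ℤ => (3 * p.1 + 1, p.2)) := by
      rintro ⟨a, b⟩ ⟨c, d⟩ h; simp only [Prod.mk.injEq] at h ⊢; omega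
    have hM : HasSum (fun p : ℤ × ℤ => auxF q (3 * p.1 + 1, p.2)) 0 := by
      rw [← aux_mid q]
      exact (hL.summable.comp_injective i1).hasSum
    have h := (aux_split3 _ _ _ _ hR hM (aux_neg q _ hR)).unique hL
    linear_combination -h / 2
end
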